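/- For real numbers \gamma, \delta and a natural number j, define f_j^{\gamma,\delta}(x) = \frac{(-1)^j}{j!} \prod_{i=0}^{j-1} (x - i(\gamma+\delta+1+i)). For real \alpha, \beta, \gamma, \delta, define the Racah polynomials r_n^{\alpha,\beta,\gamma,\delta}(x) = \sum_{j=0}^n \frac{(\alpha+1+j)_{n-j} (\beta+\delta+1+j)_{n-j} (\gamma+1+j)_{n-j}}{(-1)^j (n-j)! \, (n+\alpha+\beta+1+j)_{n-j}} \, f_j^{\gamma,\delta}(x) (well defined whenever the Pochhammer symbols in the denominators are nonzero), the quadratic map \lambda^{\gamma,\delta}(x) = x(x+\gamma+\delta+1), and the normalized Casorati Racah determinant R^{\alpha,\beta,\gamma,\delta}_{n,m,x} = \det\big( r^{\alpha,\beta,\gamma,\delta}_{m+j-1}(\lambda^{\gamma,\delta}(x+i-1)) \big)_{i,j=1}^n \big/ \prod_{l=1}^{n-1} (2x+\gamma+\delta+1+l)_l. Let n, m be natural numbers and x, \alpha, \beta, \gamma, \delta real numbers such that \alpha+\beta is not an integer, \prod_{l=1}^{n-1} (2x+\gamma+\delta+1-n-m+l)_l \ne 0 and \prod_{l=1}^{m-1}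 (-2x-\gamma-\delta+1+l)_l \ne 0. Then: R^{\alpha-n-m, \, \beta-n-m, \, \gamma-n-m, \, \delta}_{n,m,x} = R^{-\alpha, \, -\beta, \, -\gamma, \, -\delta}_{m,n,-x}. -/

import Mathlib

/-- The Pochhammer symbol `(y)_l = y (y+1) ⋯ (y+l-1)`. -/
noncomputable def poch (y : ℝ) (l : ℕ) : ℝ := ∏ k ∈ Finset.range l, (y + k)

/-- The polynomial `f_j^{γ,δ}(x) = ((-1)^j/j!) ∏_{i=0}^{j-1} (x - i(γ+δ+1+i))`. -/
noncomputable def fpol (γ δ : ℝ) (j : ℕ) (x : ℝ) : ℝ :=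
  ((-1 : ℝ) ^ j / j.factorial) * ∏ i ∈ Finset.range j, (x - i * (γ + δ + 1 + i))

/-- The Racah polynomial `r_n^{α,β,γ,δ}(x)`. -/
noncomputable def racah (α β γ δ : ℝ) (n : ℕ) (x : ℝ) : ℝ :=
  ∑ j ∈ Finset.range (n + 1),
    (poch (α + 1 + j) (n - j) * poch (β + δ + 1 + j) (n - j) *
        poch (γ + 1 + j) (n - j) /
      ((-1 : ℝ) ^ j * (n - j).factorial * poch (n + α + β + 1 + j) (n - j))) *
    fpol γ δ j x

/-- The normalized Casorati Racah determinant `R^{α,β,γ,δ}_{n,m,x}`. -/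
noncomputable def racahCasorati (α β γ δ : ℝ) (n m : ℕ) (x : ℝ) : ℝ :=
  Matrix.det (Matrix.of fun i j : Fin n =>
    racah α β γ δ (m + (j : ℕ)) ((x + (i : ℕ)) * (x + (i : ℕ) + γ + δ + 1))) /
  ∏ l ∈ Finset.Icc 1 (n - 1), poch (2 * x + γ + δ + 1 + l) l

lemma poch_succ (y : ℝ) (l : ℕ) : poch y (l+1) = poch y l * (y + l) := by
  simp [poch, Finset.prod_range_succ]

lemma poch_succ' (y : ℝ) (l : ℕ) : poch y (l+1) = y * poch (y+1) l := by
  simp only [poch, Finset.prod_range_succ']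
  rw [mul_comm]
  simp [add_comm, add_left_comm]

lemma poch_add (y : ℝ) (a b : ℕ) : poch y (a+b) = poch y a * poch (y+a) b := by
  simp only [poch, Finset.prod_range_add]
  simp [add_assoc]

lemma poch_neg (y : ℝ) (l : ℕ) : poch y l = (-1)^l * poch (1 - y - l) l := by
  unfold poch
  have h0 : (-1:ℝ)^l = ∏ k ∈ Finset.range l, (-1:ℝ) := by simp
  rw [← Finset.prod_range_reflect (fun k : ℕ => (1 - y - l + k : ℝ)), h0,
    ← Finset.prod_mul_distrib]
  refine Finset.prod_congr rfl fun k hk => ?_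
  have h : k + 1 ≤ l := Finset.mem_range.mp hk
  obtain ⟨d, rfl⟩ := Nat.exists_eq_add_of_le h
  have : k + 1 + d - 1 - k = d := by omega
  rw [this]; push_cast; ring

noncomputable def dsc (x : ℝ) (l : ℕ) : ℝ := ∏ i ∈ Finset.range l, (x - i)

lemma dsc_choose (x : ℝ) (l : ℕ) : dsc x l / l.factorial = Ring.choose x l := by
  rw [Ring.choose_eq_smul, smul_eq_mul, div_eq_inv_mul]
  congr 1
  induction l with
  | zero => simp [dsc]
  | succ k ih =>
    rw [descPochhammer_succ_right, Polynomial.smeval_mul, ← ih, Polynomial.smeval_sub,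
      Polynomial.smeval_X, Polynomial.smeval_natCast]
    simp [dsc, Finset.prod_range_succ]

lemma vander (x : ℝ) (M : ℕ) :
    ∑ u ∈ Finset.range (M+1), Ring.choose x u * Ring.choose (-x) (M-u) = if M = 0 then 1 else 0 := by
  rw [← Finset.Nat.sum_antidiagonal_eq_sum_range_succ (fun a b => Ring.choose x a * Ring.choose (-x) b),
    ← Ring.add_choose_eq M (Commute.all _ _)]
  split_ifs with h
  · simp [h]
  · obtain ⟨k, rfl⟩ := Nat.exists_eq_succ_of_ne_zero h
    simp [Ring.choose_zero_succ]

/-- A -/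
noncomputable def A0 (x s : ℝ) (k j : ℕ) : ℝ :=
  if k ≤ j then dsc x (j-k) * poch (x+s+k) (j-k) / (j-k).factorial else 0

noncomputable def B0 (α β γ δ : ℝ) (j n : ℕ) : ℝ :=
  if j ≤ n then (poch (α + 1 + j) (n - j) * poch (β + δ + 1 + j) (n - j) *
        poch (γ + 1 + j) (n - j) /
      ((n - j).factorial * poch (n + α + β + 1 + j) (n - j))) else 0

lemma A0_step (x s : ℝ) (k j : ℕ) :
    A0 (x+1) s k j = A0 x s k j + (2*x+s+k+1) * A0 x s (k+1) j := by
  unfold A0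
  rcases lt_trichotomy j k with h | rfl | h
  · rw [if_neg (by omega), if_neg (by omega), if_neg (by omega)]; ring
  · simp [dsc, poch]
  · rw [if_pos (by omega), if_pos (by omega), if_pos (by omega)]
    obtain ⟨d, rfl⟩ := Nat.exists_eq_add_of_lt h
    have e1 : k + d + 1 - k = d + 1 := by omega
    have e2 : k + d + 1 - (k+1) = d := by omega
    rw [e1, e2, Nat.factorial_succ]
    have h1 : dsc (x+1) (d+1) = (x+1) * dsc x d := by
      simp only [dsc, Finset.prod_range_succ']
      rw [mul_comm]; simp
    have h2 : dsc x (d+1) = dsc x d * (x - d) := by simp [dsc, Finset.prod_range_succ]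
    rw [h1, h2, poch_succ, poch_succ']
    have e3 : x + s + (k+1 : ℕ) = x + 1 + s + k := by push_cast; ring
    have e4 : x + s + k + 1 = x + 1 + s + k := by ring
    rw [e3, e4]
    have := Nat.factorial_ne_zero d
    push_cast
    field_simp
    ring

lemma newton (x s : ℝ) (i k0 j : ℕ) :
    A0 (x+i) s k0 j = ∑ k ∈ Finset.range (i+1),
      (i.choose k : ℝ) * poch (2*x+s+k0+i) k * A0 x s (k0+k) j := by
  induction i generalizing k0 with
  | zero => simp [poch]
  | succ i ih =>
    have e : x + (i+1 : ℕ) = (x + i) + 1 := by push_cast; ring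
    rw [e, A0_step, ih, ih]
    set y : ℝ := 2*x+s+k0+i with hy
    have e1 : 2*x+s+(k0+1 : ℕ)+i = y+1 := by push_cast; rw [hy]; ring
    have e2 : 2*x+s+k0+(i+1 : ℕ) = y+1 := by push_cast; rw [hy]; ring
    have e3 : 2*(x+i)+s+k0+1 = y+i+1 := by rw [hy]; ring
    rw [e1, e2, e3, Finset.sum_range_succ' _ (i+1)]
    have h0 : ∑ k ∈ Finset.range (i+1), (i.choose k : ℝ) * poch y k * A0 x s (k0+k) j
      = ∑ k ∈ Finset.range (i+1+1), (i.choose k : ℝ) * poch y k * A0 x s (k0+k) j := by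
      rw [Finset.sum_range_succ _ (i+1)]; simp
    rw [h0, Finset.sum_range_succ' _ (i+1), Finset.mul_sum, add_right_comm, ← Finset.sum_add_distrib]
    congr 1
    · refine Finset.sum_congr rfl fun k _ => ?_
      have e4 : k0 + 1 + k = k0 + (k+1) := by ring
      rw [e4, ← mul_assoc, ← add_mul, poch_succ', poch_succ, Nat.choose_succ_succ]
      have hc : (i.choose (k+1) : ℝ) * (k+1) = i.choose k * (i - k) := by
        have := Nat.choose_succ_right_eq i k
        rcases le_or_gt k i with h | h
        · have := congrArg (Nat.cast : ℕ → ℝ) this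
          push_cast [Nat.cast_sub h] at this
          exact this
        · simp [Nat.choose_eq_zero_of_lt h, Nat.choose_eq_zero_of_lt (Nat.lt_succ_of_lt h)]
      push_cast
      congr 1
      linear_combination (-poch (y+1) k) * hc
    · simp [poch]

lemma racah_eq (α β γ δ y : ℝ) (p : ℕ) :
    racah α β γ δ p (y * (y+γ+δ+1)) =
      ∑ j ∈ Finset.range (p+1), A0 y (γ+δ+1) 0 j * B0 α β γ δ j p := by
  unfold racah
  refine Finset.sum_congr rfl fun j hj => ?_
  have hj' : j ≤ p := by simpa [Nat.lt_succ_iff] using hj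
  unfold A0 B0 fpol
  rw [if_pos (Nat.zero_le _), if_pos hj']
  have : ∏ i ∈ Finset.range j, (y * (y+γ+δ+1) - i * (γ+δ+1+i)) = dsc y j * poch (y + (γ+δ+1) + (0:ℕ)) j := by
    unfold dsc poch
    rw [← Finset.prod_mul_distrib]
    refine Finset.prod_congr rfl fun i _ => ?_
    push_cast; ring
  rw [this]
  have hs : ((-1:ℝ)^j) * (-1)^j = 1 := by rw [← mul_pow]; simp
  have hs0 : ((-1:ℝ)^j) ≠ 0 := by simp
  simp only [Nat.sub_zero]
  rw [mul_assoc ((-1:ℝ)^j), mul_comm ((-1:ℝ)^j), ← div_div]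
  field_simp

/-- P -/
noncomputable def P0 (α β γ δ x : ℝ) (k p : ℕ) : ℝ :=
  ∑ j ∈ Finset.range (p+1), A0 x (γ+δ+1) k j * B0 α β γ δ j p

lemma casorati_eq (α β γ δ x : ℝ) (n m : ℕ)
    (h : ∏ l ∈ Finset.Icc 1 (n - 1), poch (2 * x + γ + δ + 1 + l) l ≠ 0) :
    racahCasorati α β γ δ n m x =
      Matrix.det (Matrix.of fun i j : Fin n => P0 α β γ δ x i (m + j)) := by
  unfold racahCasorati
  rw [div_eq_iff h]
  have hm : (Matrix.of fun i j : Fin n =>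
      racah α β γ δ (m + (j : ℕ)) ((x + (i : ℕ)) * (x + (i : ℕ) + γ + δ + 1)))
      = (Matrix.of fun i k : Fin n => ((i:ℕ).choose k : ℝ) * poch (2*x+γ+δ+1+(i:ℕ)) k) *
        (Matrix.of fun i j : Fin n => P0 α β γ δ x i (m + j)) := by
    ext i j
    simp only [Matrix.of_apply, Matrix.mul_apply]
    rw [racah_eq, Fin.sum_univ_eq_sum_range (fun k => ((i:ℕ).choose k : ℝ) * poch (2*x+γ+δ+1+(i:ℕ)) k *
      P0 α β γ δ x k (m + j))]
    simp only [newton, P0, Finset.sum_mul, Finset.mul_sum]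
    rw [Finset.sum_comm]
    have hi := i.2
    rw [← Finset.sum_subset (Finset.range_subset_range.mpr (show (i:ℕ)+1 ≤ n from hi))]
    · refine Finset.sum_congr rfl fun k _ => Finset.sum_congr rfl fun l _ => ?_
      have : 2*x+(γ+δ+1)+(0:ℕ)+(i:ℕ) = 2*x+γ+δ+1+(i:ℕ) := by push_cast; ring
      rw [this, Nat.zero_add]; ring
    · intro k _ hk
      have : (i:ℕ) < k := by simpa using hk
      simp [Nat.choose_eq_zero_of_lt this]
  rw [hm, Matrix.det_mul, mul_comm]
  congr 1
  rw [Matrix.det_of_isLowerTriangular]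
  · simp only [Matrix.of_apply, Nat.choose_self, Nat.cast_one, one_mul]
    rw [Fin.prod_univ_eq_prod_range (fun i => poch (2*x+γ+δ+1+(i:ℕ)) i) n]
    rcases n with _ | n
    · simp
    · rw [Finset.prod_range_succ', Nat.add_sub_cancel, Finset.range_eq_Ico,
        Finset.prod_Ico_add' (fun i => poch (2*x+γ+δ+1+(i:ℕ)) i) 0 n 1]
      simp [poch]
      rfl
  · intro i j hij
    have : (i:ℕ) < j := hij
    simp [Nat.choose_eq_zero_of_lt this]

lemma tri_sum (N : ℕ) (f g : ℕ → ℕ → ℝ) (hf : ∀ i k, k < i → f i k = 0)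
    (hg : ∀ k j, k < N → j < k → g k j = 0) (i j : ℕ) (hj : j < N) :
    ∑ k ∈ Finset.range N, f i k * g k j =
      if i ≤ j then ∑ u ∈ Finset.range (j-i+1), f i (i+u) * g (i+u) j else 0 := by
  split_ifs with h
  · have e : j - i + 1 = (j+1) - i := by omega
    rw [e, ← Finset.sum_Ico_eq_sum_range (fun k => f i k * g k j)]
    symm
    apply Finset.sum_subset
    · intro k; simp; omega
    · intro k hk hk'
      simp only [Finset.mem_Ico, not_and, not_lt, Finset.mem_range] at hk hk'
      by_cases h1 : k < i
      · rw [hf _ _ h1, zero_mul]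
      · rw [hg k j hk (by omega), mul_zero]
  · apply Finset.sum_eq_zero
    intro k hk
    by_cases h1 : k < i
    · rw [hf _ _ h1, zero_mul]
    · rw [hg k j (by simpa using hk) (by omega), mul_zero]

/-- flip -/
noncomputable def Fl (N : ℕ) (f : ℕ → ℕ → ℝ) (i j : ℕ) : ℝ :=
  (-1)^(i+j) * f (N-1-j) (N-1-i)

lemma Fl_zero (N : ℕ) (f : ℕ → ℕ → ℝ) (hf : ∀ i k, k < i → f i k = 0) (k j : ℕ)
    (hk : k < N) (h : j < k) : Fl N f k j = 0 := by
  unfold Fl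
  rw [hf _ _ (by omega), mul_zero]

lemma A0_zero (x s : ℝ) (i k : ℕ) (h : k < i) : A0 x s i k = 0 := by
  unfold A0; rw [if_neg (by omega)]

lemma B0_zero (α β γ δ : ℝ) (i k : ℕ) (h : k < i) : B0 α β γ δ i k = 0 := by
  unfold B0; rw [if_neg (by omega)]

lemma sgn (k d : ℕ) : (-1:ℝ)^(k+(k+d)) = (-1)^d := by
  rw [← add_assoc, pow_add, ← two_mul, pow_mul]; simp

lemma sgn2 (d : ℕ) : (-1:ℝ)^d * (-1)^d = 1 := by
  rw [← mul_pow]; simp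

lemma FlA (N : ℕ) (x s : ℝ) (k d : ℕ) (h : k + d < N) :
    Fl N (A0 (-x) (2-s)) k (k+d) = Ring.choose (-x) d * poch (x+(s-N)+k) d := by
  unfold Fl A0
  rw [if_pos (by omega), ← dsc_choose]
  obtain ⟨r, rfl⟩ := Nat.exists_eq_add_of_lt h
  have e1 : k + d + r + 1 - 1 - k - (k + d + r + 1 - 1 - (k+d)) = d := by omega
  have e2 : k + d + r + 1 - 1 - (k+d) = r := by omega
  rw [e1, e2, poch_neg, sgn]
  have e3 : 1 - (-x + (2-s) + r) - d = x + (s - (k+d+r+1 : ℕ)) + k := by push_cast; ring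
  rw [e3]
  linear_combination (dsc (-x) d * poch (x + (s - (k+d+r+1 : ℕ)) + k) d / d.factorial) * sgn2 d

lemma A_inv (N : ℕ) (x s : ℝ) (i j : ℕ) (hj : j < N) :
    ∑ k ∈ Finset.range N, A0 x (s-N) i k * Fl N (A0 (-x) (2-s)) k j = if i = j then 1 else 0 := by
  rw [tri_sum N _ _ (A0_zero _ _) (Fl_zero N _ (A0_zero _ _)) i j hj]
  by_cases h : i ≤ j
  · rw [if_pos h]
    obtain ⟨M, rfl⟩ := Nat.exists_eq_add_of_le h
    have e : i + M - i = M := by omega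
    rw [e]
    have : ∀ u ∈ Finset.range (M+1), A0 x (s-N) i (i+u) * Fl N (A0 (-x) (2-s)) (i+u) (i+M) =
        poch (x+(s-N)+i) M * (Ring.choose x u * Ring.choose (-x) (M-u)) := by
      intro u hu
      have hu' : u ≤ M := by simpa [Nat.lt_succ_iff] using hu
      obtain ⟨v, rfl⟩ := Nat.exists_eq_add_of_le hu'
      have e2 : u + v - u = v := by omega
      rw [← add_assoc, FlA N x s (i+u) v (by omega), e2, poch_add]
      unfold A0
      rw [if_pos (by omega), Nat.add_sub_cancel_left, ← dsc_choose x]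
      have e3 : x + (s-N) + (i+u : ℕ) = x + (s-N) + i + u := by push_cast; ring
      rw [e3]; ring
    rw [Finset.sum_congr rfl this, ← Finset.mul_sum, vander]
    rcases M with _ | M
    · simp [poch]
    · simp
  · rw [if_neg h, if_neg (by omega)]

lemma bpart (c : ℝ) (hc : ∀ t : ℕ, c + t ≠ 0) (M u : ℕ) :
    ∑ v ∈ Finset.range (u+1), (-1:ℝ)^v * ((M+1).choose v) * (c+2*v+1) / poch (c+v+1) (M+2)
      = (-1)^u * (M.choose u) / poch (c+u+2) (M+1) := by
  have hp : ∀ (t l : ℕ), poch (c+t) l ≠ 0 := by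
    intro t l
    refine Finset.prod_ne_zero_iff.mpr fun k _ => ?_
    have := hc (t+k); push_cast at this; rwa [add_assoc]
  induction u with
  | zero =>
    have h1 := hc 1
    have h2 := hp 2 (M+1)
    push_cast at h1 h2
    simp only [zero_add, Finset.sum_range_one, poch_succ' _ (M+1)]
    have e : c + 1 + 1 = c + 2 := by ring
    simp [e]
    field_simp
  | succ u ih =>
    rw [Finset.sum_range_succ, ih]
    have e1 : c + (u+1 : ℕ) + 1 = c + u + 2 := by push_cast; ring
    have e2 : c + (u+1 : ℕ) + 2 = c + u + 2 + 1 := by push_cast; ring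
    rw [e1, e2]
    have h1 := hc (u+2)
    have h2 := hp (u+3) M
    have h3 := hc (u+M+3)
    push_cast at h1 h2 h3
    have e3 : c + (u+3) = c + u + 2 + 1 := by ring
    have e4 : c + (u + 2) = c + u + 2 := by ring
    have e5 : c + (u+M+3) = c + u + 2 + 1 + M := by ring
    rw [e3] at h2; rw [e4] at h1; rw [e5] at h3
    rw [poch_succ' _ (M+1), poch_succ' _ M, poch_succ _ M, Nat.choose_succ_succ]
    have hcc : (M.choose (u+1) : ℝ) * (u+1) = M.choose u * (M - u) := by
      have := Nat.choose_succ_right_eq M u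
      rcases le_or_gt u M with h | h
      · have := congrArg (Nat.cast : ℕ → ℝ) this
        push_cast [Nat.cast_sub h] at this
        exact this
      · simp [Nat.choose_eq_zero_of_lt h, Nat.choose_eq_zero_of_lt (Nat.lt_succ_of_lt h)]
    push_cast
    rw [pow_succ]
    generalize poch (c+u+2+1) M = p at *
    generalize (M.choose u : ℝ) = a at *
    generalize (M.choose (u+1) : ℝ) = b at *
    field_simp
    linear_combination (-1) * hcc

lemma bsum (c : ℝ) (hc : ∀ t : ℕ, c + t ≠ 0) (M : ℕ) :
    ∑ u ∈ Finset.range (M+1), (-1:ℝ)^(M-u) /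
      (u.factorial * (M-u).factorial * poch (c+u+1) u * poch (c+2*u+2) (M-u))
      = if M = 0 then 1 else 0 := by
  have hp : ∀ (t l : ℕ), poch (c+t) l ≠ 0 := by
    intro t l
    refine Finset.prod_ne_zero_iff.mpr fun k _ => ?_
    have := hc (t+k); push_cast at this; rwa [add_assoc]
  rcases M with _ | M
  · simp [poch]
  have : ∀ u ∈ Finset.range (M+1+1), (-1:ℝ)^(M+1-u) /
      (u.factorial * (M+1-u).factorial * poch (c+u+1) u * poch (c+2*u+2) (M+1-u)) =
      (-1)^(M+1) / (M+1).factorial *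
        ((-1:ℝ)^u * ((M+1).choose u) * (c+2*u+1) / poch (c+u+1) (M+2)) := by
    intro u hu
    have hu' : u ≤ M+1 := by simpa [Nat.lt_succ_iff] using hu
    have hf := Nat.choose_mul_factorial_mul_factorial hu'
    have hM : M + 2 = u + (1 + (M+1-u)) := by omega
    have hs : (-1:ℝ)^(M+1) = (-1)^u * (-1)^(M+1-u) := by rw [← pow_add]; congr 1; omega
    rw [hM, poch_add, poch_add, hs]
    have e1 : c + u + 1 + u = c + 2*u + 1 := by ring
    have e2 : c + 2*u + 1 + (1:ℕ) = c + 2*u+2 := by push_cast; ring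
    have e3 : poch (c+2*u+1) 1 = c+2*u+1 := by simp [poch]
    rw [e1, e2, e3]
    have h1 := hp (u+1) u
    have h2 := hp (2*u+2) (M+1-u)
    have h3 := hc (2*u+1)
    push_cast at h1 h2 h3
    rw [← add_assoc] at h1 h2 h3
    have hf' := congrArg (Nat.cast : ℕ → ℝ) hf
    push_cast at hf'
    have g1 : (u.factorial : ℝ) ≠ 0 := by exact_mod_cast Nat.factorial_ne_zero _
    have g2 : ((M+1-u).factorial : ℝ) ≠ 0 := by exact_mod_cast Nat.factorial_ne_zero _
    have g3 : ((M+1).factorial : ℝ) ≠ 0 := by exact_mod_cast Nat.factorial_ne_zero _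
    generalize poch (c+u+1) u = p at *
    generalize poch (c+2*u+2) (M+1-u) = q at *
    generalize (u.factorial : ℝ) = f1 at *
    generalize ((M+1-u).factorial : ℝ) = f2 at *
    generalize ((M+1).factorial : ℝ) = f3 at *
    generalize ((M+1).choose u : ℝ) = f4 at *
    rw [div_mul_div_comm, div_eq_div_iff (by positivity) (by positivity), ← hf']
    linear_combination (-(-1:ℝ)^(M+1-u) * f4 * f1 * f2 * p * q * (c+2*u+1)) * sgn2 u
  rw [Finset.sum_congr rfl this, ← Finset.mul_sum, bpart c hc M (M+1)]
  simp

lemma FlB (N : ℕ) (α β γ δ : ℝ) (k d : ℕ) (h : k + d < N) :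
    Fl N (B0 (-α) (-β) (-γ) (-δ)) k (k+d) = (-1)^d *
      (poch (α-N+1+k) d * poch (β-N+δ+1+k) d * poch (γ-N+1+k) d) /
       (d.factorial * poch (2*k+α+β-2*N+2) d) := by
  unfold Fl B0
  rw [if_pos (by omega)]
  obtain ⟨r, rfl⟩ := Nat.exists_eq_add_of_lt h
  have e1 : k + d + r + 1 - 1 - k - (k + d + r + 1 - 1 - (k+d)) = d := by omega
  have e2 : k + d + r + 1 - 1 - (k+d) = r := by omega
  have e0 : k + d + r + 1 - 1 - k = d + r := by omega
  rw [e1, e2, e0, sgn, poch_neg (-α+1+r), poch_neg (-β + -δ + 1 + r), poch_neg (-γ+1+r),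
    poch_neg ((d+r : ℕ) + -α + -β+1+r)]
  have a1 : 1 - (-α+1+r) - d = α - (k+d+r+1:ℕ) + 1 + k := by push_cast; ring
  have a2 : 1 - (-β + -δ+1+r) - d = β - (k+d+r+1:ℕ) + δ + 1 + k := by push_cast; ring
  have a3 : 1 - (-γ+1+r) - d = γ - (k+d+r+1:ℕ) + 1 + k := by push_cast; ring
  have a4 : 1 - ((d+r : ℕ) + -α + -β+1+r) - d = 2*k+α+β-2*(k+d+r+1:ℕ)+2 := by push_cast; ring
  rw [a1, a2, a3, a4]
  rcases neg_one_pow_eq_or ℝ d with hd | hd <;> rw [hd]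
  · ring
  · simp only [neg_mul, mul_neg, one_mul, neg_neg, div_neg, neg_div]

lemma B_inv (N : ℕ) (α β γ δ : ℝ) (hαβ : ∀ z : ℤ, α + β ≠ (z : ℝ)) (i j : ℕ) (hj : j < N) :
    ∑ k ∈ Finset.range N, B0 (α-N) (β-N) (γ-N) δ i k * Fl N (B0 (-α) (-β) (-γ) (-δ)) k j
      = if i = j then 1 else 0 := by
  rw [tri_sum N _ _ (B0_zero _ _ _ _) (Fl_zero N _ (B0_zero _ _ _ _)) i j hj]
  by_cases h : i ≤ j
  · rw [if_pos h]
    obtain ⟨M, rfl⟩ := Nat.exists_eq_add_of_le h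
    have e : i + M - i = M := by omega
    rw [e]
    set c : ℝ := 2*i+α+β-2*N with hcdef
    have hc : ∀ t : ℕ, c + t ≠ 0 := by
      intro t ht
      apply hαβ (2*N-2*i-t)
      push_cast
      linarith
    have : ∀ u ∈ Finset.range (M+1), B0 (α-N) (β-N) (γ-N) δ i (i+u) *
        Fl N (B0 (-α) (-β) (-γ) (-δ)) (i+u) (i+M) =
        (poch (α-N+1+i) M * poch (β-N+δ+1+i) M * poch (γ-N+1+i) M) *
        ((-1:ℝ)^(M-u) /
      (u.factorial * (M-u).factorial * poch (c+u+1) u * poch (c+2*u+2) (M-u))) := by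
      intro u hu
      have hu' : u ≤ M := by simpa [Nat.lt_succ_iff] using hu
      obtain ⟨v, rfl⟩ := Nat.exists_eq_add_of_le hu'
      have e2 : u + v - u = v := by omega
      rw [← add_assoc, FlB N α β γ δ (i+u) v (by omega), e2, poch_add, poch_add, poch_add]
      unfold B0
      rw [if_pos (by omega), Nat.add_sub_cancel_left]
      have a1 : α-N+1+(i+u:ℕ) = α-N+1+i+u := by push_cast; ring
      have a2 : β-N+δ+1+(i+u:ℕ) = β-N+δ+1+i+u := by push_cast; ring
      have a3 : γ-N+1+(i+u:ℕ) = γ-N+1+i+u := by push_cast; ring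
      have a4 : 2*(i+u:ℕ)+α+β-2*N+2 = c+2*u+2 := by rw [hcdef]; push_cast; ring
      have a5 : (i+u:ℕ)+(α-N)+(β-N)+1+i = c+u+1 := by rw [hcdef]; push_cast; ring
      rw [a1, a2, a3, a4, a5, div_mul_div_comm, mul_div_assoc']
      congr 1 <;> ring
    rw [Finset.sum_congr rfl this, ← Finset.mul_sum, bsum c hc]
    rcases M with _ | M
    · simp [poch]
    · simp
  · rw [if_neg h, if_neg (by omega)]

lemma rot_pow (N k : ℕ) (i : Fin (N+1)) :
    (((finRotate (N+1)) ^ k) i : ℕ) = ((i:ℕ) + k) % (N+1) := by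
  induction k with
  | zero => simp [Nat.mod_eq_of_lt i.2]
  | succ k ih =>
    rw [pow_succ', Equiv.Perm.mul_apply, finRotate_apply, Fin.val_add, ih, Fin.val_one']
    rw [← Nat.add_mod, add_assoc]

def e1 (n m : ℕ) : Fin n ⊕ Fin m ≃ Fin (n+m) := finSumFinEquiv
def e2 (n m : ℕ) : Fin m ⊕ Fin n ≃ Fin (n+m) := finSumFinEquiv.trans (finCongr (Nat.add_comm m n))

lemma sign_swap (n m : ℕ) :
    Equiv.Perm.sign ((Equiv.sumComm (Fin m) (Fin n)).trans ((e1 n m).trans (e2 n m).symm))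
      = (-1)^(n*m) := by
  rw [← Equiv.Perm.sign_permCongr (e2 n m)]
  rcases Nat.eq_zero_or_pos (n+m) with h | h
  · obtain ⟨rfl, rfl⟩ : n = 0 ∧ m = 0 := by omega
    have : Subsingleton (Equiv.Perm (Fin (0+0))) := by
      rw [Nat.zero_add]; infer_instance
    rw [Subsingleton.elim ((e2 0 0).permCongr _) 1]; simp
  · obtain ⟨N, hN⟩ : ∃ N, n + m = N + 1 := ⟨n+m-1, by omega⟩
    have key : (e2 n m).permCongr ((Equiv.sumComm (Fin m) (Fin n)).trans ((e1 n m).trans (e2 n m).symm))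
        = (finRotate (n+m))^n := by
      ext t
      have hr : (((finRotate (n+m)) ^ n) t : ℕ) = ((t:ℕ) + n) % (n+m) := by
        clear h
        revert t
        rw [hN]
        exact fun t => rot_pow N n t
      rw [hr]
      obtain ⟨s, rfl⟩ := (e2 n m).surjective t
      rcases s with s | s
      · have := s.2
        simp [e1, e2]
        rw [Nat.mod_eq_of_lt (by omega)]; omega
      · have := s.2
        simp [e1, e2]
        have : (s:ℕ) + m + n = s + (n+m) := by omega
        rw [this, Nat.add_mod_right, Nat.mod_eq_of_lt (by omega)]
    rw [key, map_pow, sign_finRotate, ← pow_mul]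
    have : ∃ q, (n+m-1)*n = n*m + 2*q := by
      obtain ⟨q, hq⟩ := Nat.even_mul_pred_self n
      refine ⟨q, ?_⟩
      rw [two_mul, ← hq]
      rcases n with _ | n
      · simp
      · have : n+1+m-1 = n + m := by omega
        rw [this, Nat.add_sub_cancel]; ring
    obtain ⟨q, hq⟩ := this
    rw [hq, pow_add, pow_mul]; simp

lemma jacobi (n m : ℕ) (P Q : Matrix (Fin (n+m)) (Fin (n+m)) ℝ) (h : P * Q = 1) :
    (-1:ℝ)^(n*m) * P.det *
      (Matrix.of fun i j : Fin m => Q (e2 n m (Sum.inl i)) (e1 n m (Sum.inr j))).det =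
      (Matrix.of fun i j : Fin n => P (e1 n m (Sum.inl i)) (e2 n m (Sum.inr j))).det := by
  set Q12 := (Matrix.of fun i j : Fin m => Q (e2 n m (Sum.inl i)) (e1 n m (Sum.inr j)))
  set Q22 := (Matrix.of fun (i : Fin n) (j : Fin m) => Q (e2 n m (Sum.inr i)) (e1 n m (Sum.inr j)))
  set P12 := (Matrix.of fun i j : Fin n => P (e1 n m (Sum.inl i)) (e2 n m (Sum.inr j)))
  set P22 := (Matrix.of fun (i : Fin m) (j : Fin n) => P (e1 n m (Sum.inr i)) (e2 n m (Sum.inr j)))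
  set σ := (Equiv.sumComm (Fin m) (Fin n)).trans ((e1 n m).trans (e2 n m).symm) with hσ
  have hs : ∀ a, e2 n m (σ a) = e1 n m a.swap := by intro a; simp [hσ]
  have hK : ((P.submatrix (e2 n m) (e2 n m)).submatrix σ id) * Matrix.fromBlocks Q12 0 Q22 1
      = Matrix.fromBlocks 1 P22 0 P12 := by
    have hPQ : ∀ a b, ∑ c : Fin m ⊕ Fin n, P a (e2 n m c) * Q (e2 n m c) b = if a = b then 1 else 0 := by
      intro a b
      rw [(e2 n m).sum_comp (fun c => P a c * Q c b), ← Matrix.mul_apply, h, Matrix.one_apply]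
    ext a b
    rcases b with b | b
    · have := hPQ (e1 n m a.swap) (e1 n m (Sum.inr b))
      rw [Fintype.sum_sum_type] at this
      simp only [Matrix.mul_apply, Fintype.sum_sum_type, Matrix.submatrix_apply, id, hs,
        Matrix.fromBlocks_apply₁₁, Matrix.fromBlocks_apply₂₁]
      refine Eq.trans this ?_
      rcases a with a | a <;> simp [Matrix.one_apply]
    · simp only [Matrix.mul_apply, Fintype.sum_sum_type, Matrix.submatrix_apply, id, hs,
        Matrix.fromBlocks_apply₁₂, Matrix.fromBlocks_apply₂₂, Matrix.one_apply]
      rcases a with a | a <;> simp [P22, P12]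
  have := congrArg Matrix.det hK
  rw [Matrix.det_mul, Matrix.det_permute, Matrix.det_submatrix_equiv_self,
    Matrix.det_fromBlocks_zero₁₂, Matrix.det_fromBlocks_zero₂₁, Matrix.det_one, Matrix.det_one,
    hσ, sign_swap] at this
  simpa using this

lemma P0_fin (N : ℕ) (α β γ δ x : ℝ) (k p : ℕ) (hp : p < N) :
    ∑ j ∈ Finset.range N, A0 x (γ+δ+1) k j * B0 α β γ δ j p = P0 α β γ δ x k p := by
  unfold P0
  symm
  apply Finset.sum_subset
  · intro j; simp; omega
  · intro j _ hj
    rw [B0_zero, mul_zero]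
    simpa using hj

lemma FlP (N : ℕ) (f g : ℕ → ℕ → ℝ) (i j : ℕ) :
    ∑ k ∈ Finset.range N, Fl N g i k * Fl N f k j =
      (-1)^(i+j) * ∑ k ∈ Finset.range N, f (N-1-j) k * g k (N-1-i) := by
  rw [← Finset.sum_range_reflect (fun k => f (N-1-j) k * g k (N-1-i)), Finset.mul_sum]
  refine Finset.sum_congr rfl fun k _ => ?_
  unfold Fl
  rw [pow_add, pow_add, pow_add]
  linear_combination ((-1)^i * (-1)^j * f (N-1-j) (N-1-k) * g (N-1-k) (N-1-i)) * sgn2 k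

/-- the symmetry of normalized Casorati determinants of Racah
polynomials. -/
theorem racah_casorati_symmetry (n m : ℕ) (x α β γ δ : ℝ)
    (hαβ : ∀ z : ℤ, α + β ≠ (z : ℝ))
    (h1 : (∏ l ∈ Finset.Icc 1 (n - 1),
      poch (2 * x + γ + δ + 1 - n - m + l) l) ≠ 0)
    (h2 : (∏ l ∈ Finset.Icc 1 (m - 1),
      poch (-(2 * x) - γ - δ + 1 + l) l) ≠ 0) :
    racahCasorati (α - n - m) (β - n - m) (γ - n - m) δ n m x
    = racahCasorati (-α) (-β) (-γ) (-δ) m n (-x) := by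
  rw [casorati_eq, casorati_eq]
  rotate_left
  · convert h2 using 4; ring
  · convert h1 using 4; ring
  have ea : ∀ y : ℝ, y - n - m = y - (n+m : ℕ) := by intro y; push_cast; ring
  rw [ea, ea, ea]
  set N := n + m with hN
  let A : Matrix (Fin N) (Fin N) ℝ := Matrix.of fun i j => A0 x (γ - N + δ + 1) i j
  let B : Matrix (Fin N) (Fin N) ℝ := Matrix.of fun i j => B0 (α-N) (β-N) (γ-N) δ i j
  let A' : Matrix (Fin N) (Fin N) ℝ := Matrix.of fun i j => Fl N (A0 (-x) (-γ + -δ + 1)) i j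
  let B' : Matrix (Fin N) (Fin N) ℝ := Matrix.of fun i j => Fl N (B0 (-α) (-β) (-γ) (-δ)) i j
  have hA : A * A' = 1 := by
    ext i j
    simp only [A, A', Matrix.mul_apply, Matrix.of_apply, Matrix.one_apply]
    have := A_inv N x (γ+δ+1) i j j.2
    rw [← Fin.sum_univ_eq_sum_range (fun k => A0 x (γ+δ+1-N) i k * Fl N (A0 (-x) (2-(γ+δ+1))) k j)] at this
    have q1 : γ - N + δ + 1 = γ + δ + 1 - N := by ring
    have q2 : -γ + -δ + 1 = 2 - (γ+δ+1) := by ring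
    rw [q1, q2, this]
    simp [Fin.ext_iff]
  have hB : B * B' = 1 := by
    ext i j
    simp only [B, B', Matrix.mul_apply, Matrix.of_apply, Matrix.one_apply]
    have := B_inv N α β γ δ hαβ i j j.2
    rw [← Fin.sum_univ_eq_sum_range (fun k => B0 (α-N) (β-N) (γ-N) δ i k *
      Fl N (B0 (-α) (-β) (-γ) (-δ)) k j)] at this
    rw [this]
    simp [Fin.ext_iff]
  have hPQ : (A * B) * (B' * A') = 1 := by
    rw [Matrix.mul_assoc, ← Matrix.mul_assoc B, hB, Matrix.one_mul, hA]
  have dA : A.det = 1 := by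
    rw [Matrix.det_of_isUpperTriangular]
    · simp [A, A0, dsc, poch]
    · intro i j hij; exact A0_zero _ _ _ _ hij
  have dB : B.det = 1 := by
    rw [Matrix.det_of_isUpperTriangular]
    · simp [B, B0, poch]
    · intro i j hij; exact B0_zero _ _ _ _ _ _ hij
  have J := jacobi n m (A*B) (B'*A') hPQ
  rw [Matrix.det_mul, dA, dB] at J
  have hP : ∀ i j : Fin N, (A*B) i j = P0 (α-N) (β-N) (γ-N) δ x i j := by
    intro i j
    rw [← P0_fin N _ _ _ _ _ _ _ j.2, Matrix.mul_apply]
    exact Fin.sum_univ_eq_sum_range (fun k => A0 x (γ-N+δ+1) i k * B0 (α-N) (β-N) (γ-N) δ k j) N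
  have hQ : ∀ i j : Fin N, (B'*A') i j =
      (-1)^((i:ℕ)+j) * P0 (-α) (-β) (-γ) (-δ) (-x) (N-1-j) (N-1-i) := by
    intro i j
    have := i.2
    rw [← P0_fin N _ _ _ _ _ _ _ (by omega), ← FlP, Matrix.mul_apply]
    exact Fin.sum_univ_eq_sum_range (fun k => Fl N (B0 (-α) (-β) (-γ) (-δ)) i k *
      Fl N (A0 (-x) (-γ + -δ + 1)) k j) N
  simp only [hP, hQ] at J
  have l1 : (Matrix.of fun i j : Fin n => P0 (α-N) (β-N) (γ-N) δ x (e1 n m (Sum.inl i)) (e2 n m (Sum.inr j)))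
      = Matrix.of fun i j : Fin n => P0 (α-N) (β-N) (γ-N) δ x i (m+j) := by
    ext i j; simp [e1, e2, Nat.add_comm]
  rw [l1] at J
  rw [← J]
  have l2 : (Matrix.of fun i j : Fin m =>
      (-1:ℝ)^((e2 n m (Sum.inl i) : ℕ) + (e1 n m (Sum.inr j) : ℕ)) *
      P0 (-α) (-β) (-γ) (-δ) (-x) (N-1-(e1 n m (Sum.inr j) : ℕ)) (N-1-(e2 n m (Sum.inl i) : ℕ)))
      = Matrix.diagonal (fun i : Fin m => (-1:ℝ)^(i:ℕ)) *
        ((Matrix.transpose (Matrix.of fun i j : Fin m => P0 (-α) (-β) (-γ) (-δ) (-x) i (n+j))).submatrix Fin.revPerm Fin.revPerm) *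
        Matrix.diagonal (fun j : Fin m => (-1:ℝ)^(n+(j:ℕ))) := by
    ext i j
    have hi := i.2
    have hj := j.2
    have q1 : N - 1 - (n + (j:ℕ)) = m - ((j:ℕ)+1) := by omega
    have q2 : N - 1 - (i:ℕ) = n + (m - ((i:ℕ)+1)) := by omega
    simp [e1, e2, q1, q2, Fin.val_rev]
    ring
  have l3 : (∏ i : Fin m, (-1:ℝ)^(i:ℕ)) * (∏ i : Fin m, (-1:ℝ)^(n+(i:ℕ))) = (-1)^(n*m) := by
    rw [← Finset.prod_mul_distrib]
    have : ∀ i : Fin m, (-1:ℝ)^(i:ℕ) * (-1)^(n+(i:ℕ)) = (-1)^n := by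
      intro i; rw [pow_add]; linear_combination ((-1:ℝ)^n) * sgn2 (i:ℕ)
    simp [this, pow_mul]
  rw [l2, Matrix.det_mul, Matrix.det_mul, Matrix.det_diagonal, Matrix.det_diagonal,
    Matrix.det_submatrix_equiv_self, Matrix.det_transpose]
  generalize Matrix.det (Matrix.of fun i j : Fin m => P0 (-α) (-β) (-γ) (-δ) (-x) i (n+j)) = D
  have l4 := sgn2 (n*m)
  linear_combination ((-1:ℝ)^(n*m) * D) * l3 + D * l4
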